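/- Let c ≥ 1 be a real number, and let F ∈ ℚ(X) be a rational fraction of degree at most d ≥ 1. Let V ⊂ ℤ be a finite set such that F has no poles in ℤ \ V. Assume that for every integer x ∉ V one has h(F(x)) ≤ c·max{1, d·log(d) + d·h(x)}. Then h(F) ≤ C·d·log(4d), where C = (4c+1923)·(12 + log max{1, #V} + 2·log(c)). -/

import Mathlib

open Polynomial

/-- The height of a rational number `q = p/q` in lowest terms: `h(x) = log max{|p|, |q|}`;
for an integer `x`, `h(x) = log max{1, |x|}`. -/
noncomputable def ratHeight (q : ℚ) : ℝ := Real.log (max |(q.num : ℝ)| (q.den : ℝ))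

/-- The height of the rational fraction `F = P/Q` in lowest terms (`P, Q ∈ ℤ[X]` coprime):
the maximum of `log |c|` over the nonzero coefficients `c` of `P` and `Q`; since some
coefficient of `Q` is a nonzero integer, this maximum equals
`log (max over all coefficients of |c|)`. -/
noncomputable def fracHeight (P Q : Polynomial ℤ) : ℝ :=
  Real.log (max (⨆ i, |(P.coeff i : ℝ)|) (⨆ i, |(Q.coeff i : ℝ)|))

/-!
For `x` outside `V`, reducing `P(x) / Q(x)` to lowest terms shows that `log max (|P(x)|, |Q(x)|)`
exceeds `h(F(x))` by exactly `log g(x)`, where `g(x) = gcd (P(x), Q(x))`. If `g` is small at `d + 1`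
moderate integers, then `P` and `Q` are small there, and Lagrange interpolation bounds `h(F)`.

The values `g(v i)` are small on average. Shifted by `a`, the Sylvester columns `X ^ k * P` and
`X ^ k * Q`, completed by powers of `X` times an element `G` of the ideal `(P, Q)` with
`G(a) = g(a)`, are `N` elements of this ideal of degree less than `N` with coefficient determinant
`g(a) ^ (N - deg P - deg Q) * Res (P, Q)`. Evaluating them at the `N` points `v i` multiplies this
determinant by the Vandermonde determinant, and `g(v i)` divides the whole `i`-th row; hence
`∏ i, g(v i) ∣ g(a) ^ (N - deg P - deg Q) * Res (P, Q) * Vandermonde (v)`.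
By the Chinese remainder theorem `a` can be chosen with `g(a) ∣ d!`, as no prime power that fails
to divide `d!` is a common fixed divisor of `P` and `Q`.

On `8 * d` consecutive integers avoiding `V`, where `log |Res (P, Q)|` contributes about
`2 * d * h(F)` to the sum, at least `d + 1` of the values satisfy
`log g ≤ h(F) / 2 + O (d * log (4 * d))`, and interpolation at these points leaves a term `h(F) / 2`
that the left-hand side absorbs.
-/

section CoeffMatrix

variable {R : Type*} [CommRing R]

lemma prod_dvd_det_of_forall_dvd {n : Type*} [Fintype n] [DecidableEq n] {M : Matrix n n R}
    {g : n → R} (h : ∀ i j, g i ∣ M i j) : ∏ i, g i ∣ M.det := by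
  choose M' hM' using h
  have hM : M = Matrix.diagonal g * Matrix.of M' := by
    ext i j
    simp [Matrix.diagonal_mul, hM']
  rw [hM, Matrix.det_mul, Matrix.det_diagonal]
  exact dvd_mul_right _ _

/-- The matrix of a family of polynomials in the basis `1, X, …, X ^ (N - 1)`: its `j`-th column
lists the coefficients of `W j` below degree `N`. -/
def coeffMatrix {N : ℕ} (W : Fin N → R[X]) : Matrix (Fin N) (Fin N) R :=
  Matrix.of fun i j => (W j).coeff i

lemma vandermonde_mul_coeffMatrix {N : ℕ} {W : Fin N → R[X]} (hW : ∀ j, (W j).natDegree < N)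
    (v : Fin N → R) :
    Matrix.vandermonde v * coeffMatrix W = Matrix.of fun i j => (W j).eval (v i) := by
  ext i j
  rw [Matrix.mul_apply, Matrix.of_apply, eval_eq_sum_range' (hW j),
    ← Fin.sum_univ_eq_sum_range fun k => (W j).coeff k * v i ^ k]
  simp [coeffMatrix, mul_comm]

lemma det_coeffMatrix_cons {N : ℕ} (G : R[X]) (W : Fin N → R[X]) :
    (coeffMatrix (Fin.cons G fun j => X * W j : Fin (N + 1) → R[X])).det =
      G.coeff 0 * (coeffMatrix W).det := by
  rw [Matrix.det_succ_row_zero, Fin.sum_univ_succ, Finset.sum_eq_zero fun j _ => ?_]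
  · have hminor : (coeffMatrix (Fin.cons G fun j => X * W j : Fin (N + 1) → R[X])).submatrix
        Fin.succ (Fin.succAbove 0) = coeffMatrix W := by
      ext i j
      simp [coeffMatrix]
    rw [hminor]
    simp [coeffMatrix]
  · simp [coeffMatrix]

lemma exists_coeffMatrix_eq_sylvester (P Q : R[X]) :
    ∃ W : Fin (P.natDegree + Q.natDegree) → R[X],
      (∀ j, W j ∈ Ideal.span {P, Q}) ∧ (∀ j, (W j).natDegree < P.natDegree + Q.natDegree) ∧
      coeffMatrix W = sylvester P Q P.natDegree Q.natDegree := by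
  refine ⟨Fin.append (fun j => X ^ (j : ℕ) * Q) fun j => X ^ (j : ℕ) * P,
    fun j => ?_, fun j => ?_, ?_⟩
  · induction j using Fin.addCases with
    | left j =>
      rw [Fin.append_left]
      exact Ideal.mul_mem_left _ _ (Ideal.mem_span_pair.mpr ⟨0, 1, by simp⟩)
    | right j =>
      rw [Fin.append_right]
      exact Ideal.mul_mem_left _ _ (Ideal.mem_span_pair.mpr ⟨1, 0, by simp⟩)
  · induction j using Fin.addCases with
    | left j =>
      rw [Fin.append_left]
      exact (natDegree_mul_le_of_le (natDegree_X_pow_le _) le_rfl).trans_lt (by lia)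
    | right j =>
      rw [Fin.append_right]
      exact (natDegree_mul_le_of_le (natDegree_X_pow_le _) le_rfl).trans_lt (by lia)
  · ext i j
    induction j using Fin.addCases with
    | left j =>
      simp only [coeffMatrix, sylvester, Matrix.of_apply, Fin.addCases_left, Fin.append_left,
        coeff_X_pow_mul', Set.mem_Icc]
      have (h : (j + Q.natDegree : ℕ) < i) : Q.coeff (i - j) = 0 :=
        coeff_eq_zero_of_natDegree_lt (by lia)
      grind
    | right j =>
      simp only [coeffMatrix, sylvester, Matrix.of_apply, Fin.addCases_right, Fin.append_right,
        coeff_X_pow_mul', Set.mem_Icc]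
      have (h : (j + P.natDegree : ℕ) < i) : P.coeff (i - j) = 0 :=
        coeff_eq_zero_of_natDegree_lt (by lia)
      grind

lemma exists_det_coeffMatrix_eq_pow_mul_resultant {P Q G : R[X]} (hG : G ∈ Ideal.span {P, Q})
    (hGdeg : G.natDegree ≤ P.natDegree + Q.natDegree) (n : ℕ) :
    ∃ W : Fin (P.natDegree + Q.natDegree + n) → R[X],
      (∀ j, W j ∈ Ideal.span {P, Q}) ∧ (∀ j, (W j).natDegree < P.natDegree + Q.natDegree + n) ∧
      (coeffMatrix W).det = G.coeff 0 ^ n * resultant P Q := by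
  induction n with
  | zero =>
    obtain ⟨W, hmem, hdeg, hW⟩ := exists_coeffMatrix_eq_sylvester P Q
    exact ⟨W, hmem, hdeg, by rw [hW, resultant, pow_zero, one_mul]⟩
  | succ n ih =>
    obtain ⟨W, hmem, hdeg, hW⟩ := ih
    refine ⟨Fin.cons G fun j => X * W j, fun j => ?_, fun j => ?_, ?_⟩
    · cases j using Fin.cases with
      | zero => exact hG
      | succ j => exact Ideal.mul_mem_left _ _ (hmem j)
    · cases j using Fin.cases with
      | zero => exact hGdeg.trans_lt (by lia)
      | succ j => exact natDegree_mul_le.trans_lt (by grind [natDegree_X_le])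
    · rw [det_coeffMatrix_cons, hW, pow_succ', mul_assoc]

lemma dvd_eval_of_mem_span_pair {P Q G : R[X]} (hG : G ∈ Ideal.span {P, Q}) {x m : R}
    (hP : m ∣ P.eval x) (hQ : m ∣ Q.eval x) : m ∣ G.eval x := by
  obtain ⟨A, B, rfl⟩ := Ideal.mem_span_pair.mp hG
  rw [eval_add, eval_mul, eval_mul]
  exact dvd_add (hP.mul_left _) (hQ.mul_left _)

lemma prod_dvd_coeff_zero_pow_mul_resultant_mul_det_vandermonde {P Q G : R[X]}
    (hG : G ∈ Ideal.span {P, Q}) (hGdeg : G.natDegree ≤ P.natDegree + Q.natDegree) {N : ℕ}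
    (hN : P.natDegree + Q.natDegree ≤ N) {v g : Fin N → R} (hP : ∀ i, g i ∣ P.eval (v i))
    (hQ : ∀ i, g i ∣ Q.eval (v i)) :
    ∏ i, g i ∣ G.coeff 0 ^ (N - (P.natDegree + Q.natDegree)) * resultant P Q *
      (Matrix.vandermonde v).det := by
  obtain ⟨n, rfl⟩ := Nat.exists_eq_add_of_le hN
  obtain ⟨W, hmem, hdeg, hW⟩ := exists_det_coeffMatrix_eq_pow_mul_resultant hG hGdeg n
  rw [Nat.add_sub_cancel_left, ← hW, mul_comm, ← Matrix.det_mul, vandermonde_mul_coeffMatrix hdeg]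
  exact prod_dvd_det_of_forall_dvd fun i j => dvd_eval_of_mem_span_pair (hmem j) (hP i) (hQ i)

theorem prod_dvd_eval_pow_mul_resultant_mul_det_vandermonde {P Q G : R[X]}
    (hG : G ∈ Ideal.span {P, Q}) (hGdeg : G.natDegree ≤ P.natDegree + Q.natDegree) (a : R) {N : ℕ}
    (hN : P.natDegree + Q.natDegree ≤ N) {v g : Fin N → R} (hP : ∀ i, g i ∣ P.eval (v i))
    (hQ : ∀ i, g i ∣ Q.eval (v i)) :
    ∏ i, g i ∣ G.eval a ^ (N - (P.natDegree + Q.natDegree)) * resultant P Q *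
      (Matrix.vandermonde v).det := by
  have hG' : taylor a G ∈ Ideal.span {taylor a P, taylor a Q} := by
    obtain ⟨A, B, rfl⟩ := Ideal.mem_span_pair.mp hG
    exact Ideal.mem_span_pair.mpr ⟨taylor a A, taylor a B, by simp [taylor_mul]⟩
  have h := prod_dvd_coeff_zero_pow_mul_resultant_mul_det_vandermonde hG' (by simpa using hGdeg)
    (by simpa using hN) (v := fun i => v i - a) (g := g) (by simpa [taylor_eval] using hP)
    (by simpa [taylor_eval] using hQ)
  rw [resultant_taylor] at h
  simpa only [taylor_coeff_zero, natDegree_taylor, Matrix.det_vandermonde_sub] using h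

end CoeffMatrix

section Gauss

variable {R : Type*} [CommRing R] [IsDomain R] [NormalizedGCDMonoid R] {K : Type*} [Field K]
  [Algebra R K] [IsFractionRing R K]

lemma exists_isPrimitive_associated_map {f : K[X]} (hf : f ≠ 0) :
    ∃ p : R[X], p.IsPrimitive ∧ Associated (p.map (algebraMap R K)) f := by
  obtain ⟨b, hb, hbf⟩ := IsLocalization.integerNormalization_spec (nonZeroDivisors R) f
  set p := IsLocalization.integerNormalization (nonZeroDivisors R) f with hp
  have hmap_ne {r : R} (hr : r ≠ 0) : algebraMap R K r ≠ 0 :=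
    (map_ne_zero_iff _ (IsFractionRing.injective R K)).mpr hr
  have hp0 : p ≠ 0 := by rwa [hp, ne_eq, IsFractionRing.integerNormalization_eq_zero_iff]
  have hcontent : IsUnit (C (algebraMap R K p.content)) :=
    isUnit_C.mpr (hmap_ne (content_eq_zero_iff.not.mpr hp0)).isUnit
  have hdenom : IsUnit (C (algebraMap R K b)) :=
    isUnit_C.mpr (hmap_ne (nonZeroDivisors.ne_zero hb)).isUnit
  have heq : C (algebraMap R K p.content) * p.primPart.map (algebraMap R K) =
      C (algebraMap R K b) * f := by
    rw [← map_C, ← Polynomial.map_mul, ← p.eq_C_content_mul_primPart, hbf, ← algebraMap_smul K b f,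
      smul_eq_C_mul]
  exact ⟨p.primPart, p.isPrimitive_primPart, (associated_isUnit_mul_left_iff hcontent).mp
    (heq ▸ (associated_isUnit_mul_left_iff hdenom).mpr .rfl)⟩

lemma isCoprime_map_algebraMap_of_isRelPrime {P Q : R[X]} (h : IsRelPrime P Q) :
    IsCoprime (P.map (algebraMap R K)) (Q.map (algebraMap R K)) := by
  refine IsRelPrime.isCoprime fun D hDP hDQ => ?_
  have hD : D ≠ 0 := by
    rintro rfl
    simp only [zero_dvd_iff, Polynomial.map_eq_zero_iff (IsFractionRing.injective R K)] at hDP hDQ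
    subst hDP hDQ
    exact not_isUnit_zero (h dvd_rfl dvd_rfl)
  obtain ⟨p, hp, hpD⟩ := exists_isPrimitive_associated_map (R := R) hD
  have hdvd {F : R[X]} (hF : D ∣ F.map (algebraMap R K)) : p ∣ F :=
    hp.dvd_of_fraction_map_dvd_fraction_map (hpD.dvd.trans hF)
  exact hpD.isUnit ((h (hdvd hDP) (hdvd hDQ)).map (mapRingHom _))

end Gauss

lemma resultant_ne_zero_of_isRelPrime {R : Type*} [CommRing R] [IsDomain R] [NormalizedGCDMonoid R]
    {P Q : R[X]} (h : IsRelPrime P Q) : resultant P Q ≠ 0 := by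
  have hinj := IsFractionRing.injective R (FractionRing R)
  have hne := resultant_ne_zero _ _ (isCoprime_map_algebraMap_of_isRelPrime (K := FractionRing R) h)
  rw [natDegree_map_eq_of_injective hinj, natDegree_map_eq_of_injective hinj, resultant_map_map]
    at hne
  exact ne_zero_of_map hne

lemma exists_C_mem_span_pair_of_isRelPrime {R : Type*} [CommRing R] [IsDomain R]
    [NormalizedGCDMonoid R] {P Q : R[X]} (h : IsRelPrime P Q) :
    ∃ r ≠ 0, C r ∈ Ideal.span {P, Q} := by
  by_cases hdeg : P.natDegree ≠ 0 ∨ Q.natDegree ≠ 0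
  · obtain ⟨A, B, -, -, hAB⟩ := exists_mul_add_mul_eq_C_resultant P Q le_rfl le_rfl hdeg
    exact ⟨resultant P Q, resultant_ne_zero_of_isRelPrime h,
      Ideal.mem_span_pair.mpr ⟨A, B, by rw [← hAB, mul_comm A, mul_comm B]⟩⟩
  · push Not at hdeg
    obtain ⟨p, rfl⟩ := natDegree_eq_zero.mp hdeg.1
    obtain ⟨q, rfl⟩ := natDegree_eq_zero.mp hdeg.2
    rcases eq_or_ne p 0 with rfl | hp
    · refine ⟨q, ?_, Ideal.mem_span_pair.mpr ⟨0, 1, by simp⟩⟩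
      rintro rfl
      exact not_isUnit_zero (h (by simp) (by simp))
    · exact ⟨p, hp, Ideal.mem_span_pair.mpr ⟨1, 0, by simp⟩⟩

section FixedDivisor

open Finset
open scoped Nat fwdDiff

variable {R : Type*} [CommRing R]

lemma eval_natCast_eq_sum_choose_mul_fwdDiff {P : R[X]} {e : ℕ} (he : P.natDegree ≤ e) (n : ℕ) :
    P.eval (n : R) = ∑ k ∈ range (e + 1), (n.choose k : R) * (Δ_[1])^[k] P.eval 0 := by
  have hnewton := shift_eq_sum_fwdDiff_iter (1 : R) P.eval n 0
  simp only [zero_add, nsmul_eq_mul, mul_one] at hnewton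
  have hchoose (k : ℕ) (hk : n < k) : (n.choose k : R) * (Δ_[1])^[k] P.eval 0 = 0 := by
    simp [Nat.choose_eq_zero_of_lt hk]
  have hdiff (k : ℕ) (hk : e < k) : (n.choose k : R) * (Δ_[1])^[k] P.eval 0 = 0 := by
    simp [fwdDiff_iter_eq_zero_of_degree_lt (he.trans_lt hk)]
  rw [hnewton]
  rcases le_total n e with h | h
  · exact sum_subset (by grind) fun k _ hk => hchoose k (by grind)
  · exact (sum_subset (by grind) fun k _ hk => hdiff k (by grind)).symm

lemma C_factorial_mul_eq_sum_descPochhammer [IsDomain R] [CharZero R] {P : R[X]} {e : ℕ}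
    (he : P.natDegree ≤ e) :
    C (e ! : R) * P =
      ∑ k ∈ range (e + 1), C (((e - k)! * e.choose k : ℕ) * (Δ_[1])^[k] P.eval 0) *
        descPochhammer R k := by
  refine eq_of_infinite_eval_eq _ _ ((Set.infinite_range_of_injective Nat.cast_injective).mono ?_)
  rintro _ ⟨n, rfl⟩
  simp only [Set.mem_ofPred_eq, eval_mul, eval_C, eval_finsetSum,
    eval_natCast_eq_sum_choose_mul_fwdDiff he, descPochhammer_eval_eq_descFactorial, mul_sum]
  refine sum_congr rfl fun k hk => ?_
  rw [Nat.descFactorial_eq_factorial_mul_choose,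
    ← Nat.choose_mul_factorial_mul_factorial (by grind : k ≤ e)]
  push_cast
  ring

lemma dvd_fwdDiff_iter_of_dvd_eval_natCast {P : R[X]} {m : R} (h : ∀ j : ℕ, m ∣ P.eval (j : R))
    (k : ℕ) : m ∣ (Δ_[1])^[k] P.eval 0 := by
  rw [fwdDiff_iter_eq_sum_shift]
  exact dvd_sum fun j _ => by simpa using (h j).mul_left _

lemma dvd_factorial_mul_coeff_of_dvd_eval_natCast [IsDomain R] [CharZero R] {P : R[X]} {e : ℕ}
    (he : P.natDegree ≤ e) {m : R} (h : ∀ j : ℕ, m ∣ P.eval (j : R)) (i : ℕ) :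
    m ∣ e ! * P.coeff i := by
  rw [← coeff_C_mul, C_factorial_mul_eq_sum_descPochhammer he, finsetSum_coeff]
  refine dvd_sum fun k _ => ?_
  rw [coeff_C_mul]
  exact ((dvd_fwdDiff_iter_of_dvd_eval_natCast h k).mul_left _).mul_right _

lemma exists_natCast_not_pow_dvd_eval [IsDomain R] [CharZero R] {P Q : R[X]}
    (hcop : IsRelPrime P Q) {e : ℕ} (hP : P.natDegree ≤ e) (hQ : Q.natDegree ≤ e) {p : R}
    (hp : Prime p) {k : ℕ} (hk : ¬ p ^ k ∣ e !) :
    ∃ j : ℕ, ¬ (p ^ k ∣ P.eval (j : R) ∧ p ^ k ∣ Q.eval (j : R)) := by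
  by_contra! hdvd
  have hcoeff {F : R[X]} (hF : F.natDegree ≤ e) (hFdvd : ∀ j : ℕ, p ^ k ∣ F.eval (j : R)) :
      C p ∣ F := by
    refine (C_dvd_iff_dvd_coeff _ _).mpr fun i => ?_
    by_contra hpi
    exact hk (hp.pow_dvd_of_dvd_mul_right k hpi
      (dvd_factorial_mul_coeff_of_dvd_eval_natCast hF hFdvd i))
  exact hp.not_isUnit (isUnit_C.mp
    (hcop (hcoeff hP fun j => (hdvd j).1) (hcoeff hQ fun j => (hdvd j).2)))

end FixedDivisor

lemma exists_dvd_of_forall_exists_not_prime_pow_dvd {g : ℕ → ℕ}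
    (hg : ∀ {m x y : ℕ}, x ≡ y [MOD m] → m ∣ g x → m ∣ g y) {M : ℕ} (hM : M ≠ 0)
    (hgM : ∀ x, g x ∣ M) {D : ℕ} (hD : D ≠ 0)
    (hlocal : ∀ p k : ℕ, p.Prime → ¬ p ^ k ∣ D → ∃ j, ¬ p ^ k ∣ g j) : ∃ a, g a ∣ D := by
  let q (p : ℕ) : ℕ := p ^ (D.factorization p + 1)
  have hq (p : ℕ) (hp : p ∈ M.primeFactors) : ∃ j, ¬ q p ∣ g j :=
    have hp' := Nat.prime_of_mem_primeFactors hp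
    hlocal p _ hp' (Nat.pow_succ_factorization_not_dvd hD hp')
  choose! j hj using hq
  obtain ⟨a, ha⟩ := Nat.chineseRemainderOfFinset j q M.primeFactors
    (fun p hp => pow_ne_zero _ (Nat.prime_of_mem_primeFactors hp).ne_zero)
    fun p hp p' hp' hne => Nat.Coprime.pow _ _ ((Nat.coprime_primes
      (Nat.prime_of_mem_primeFactors hp) (Nat.prime_of_mem_primeFactors hp')).mpr hne)
  refine ⟨a, (Nat.dvd_iff_prime_pow_dvd_dvd _ _).mpr fun p k hp hpk => ?_⟩
  by_contra hpD
  have hlt : D.factorization p < k := by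
    by_contra! hle
    exact hpD ((hp.pow_dvd_iff_le_factorization hD).mpr hle)
  have hqa : q p ∣ g a := (pow_dvd_pow p hlt).trans hpk
  have hpM : p ∈ M.primeFactors :=
    Nat.mem_primeFactors.mpr ⟨hp, ((dvd_pow_self p (by lia)).trans hqa).trans (hgM a), hM⟩
  exact hj p hpM (hg (ha p hpM) hqa)

/-- The greatest common divisor of the values of `P` and `Q` at `x`: the factor that cancels when
`P(x) / Q(x)` is put in lowest terms. -/
def valueGcd (P Q : ℤ[X]) (x : ℤ) : ℕ := Int.gcd (P.eval x) (Q.eval x)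

section ValueGcd

open scoped Nat

variable {P Q : ℤ[X]}

lemma natCast_dvd_valueGcd_iff {m : ℕ} {x : ℤ} :
    m ∣ valueGcd P Q x ↔ (m : ℤ) ∣ P.eval x ∧ (m : ℤ) ∣ Q.eval x := by
  rw [valueGcd, ← Int.natCast_dvd_natCast, Int.dvd_coe_gcd_iff]

lemma dvd_valueGcd_of_modEq {m : ℕ} {x y : ℤ} (hxy : x ≡ y [ZMOD m])
    (h : m ∣ valueGcd P Q x) : m ∣ valueGcd P Q y := by
  have heval (F : ℤ[X]) (hF : (m : ℤ) ∣ F.eval x) : (m : ℤ) ∣ F.eval y :=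
    (dvd_sub_left hF).mp (hxy.dvd.trans (sub_dvd_eval_sub y x F))
  rw [natCast_dvd_valueGcd_iff] at h ⊢
  exact ⟨heval P h.1, heval Q h.2⟩

lemma exists_ne_zero_forall_valueGcd_dvd (h : IsRelPrime P Q) :
    ∃ M ≠ 0, ∀ x, valueGcd P Q x ∣ M := by
  obtain ⟨r, hr, hmem⟩ := exists_C_mem_span_pair_of_isRelPrime h
  refine ⟨r.natAbs, Int.natAbs_ne_zero.mpr hr, fun x => ?_⟩
  have hdvd := dvd_eval_of_mem_span_pair hmem (x := x) (m := valueGcd P Q x)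
    (natCast_dvd_valueGcd_iff.mp dvd_rfl).1 (natCast_dvd_valueGcd_iff.mp dvd_rfl).2
  rwa [eval_C, Int.natCast_dvd] at hdvd

lemma exists_valueGcd_dvd_factorial (h : IsRelPrime P Q) {e : ℕ} (hP : P.natDegree ≤ e)
    (hQ : Q.natDegree ≤ e) : ∃ a, valueGcd P Q a ∣ e ! := by
  obtain ⟨M, hM, hgM⟩ := exists_ne_zero_forall_valueGcd_dvd h
  obtain ⟨a, ha⟩ := exists_dvd_of_forall_exists_not_prime_pow_dvd
    (g := fun n : ℕ => valueGcd P Q n)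
    (fun hxy => dvd_valueGcd_of_modEq (Int.natCast_modEq_iff.mpr hxy)) hM (fun x => hgM x)
    e.factorial_ne_zero fun p k hp hk => by
      simpa only [natCast_dvd_valueGcd_iff, Nat.cast_pow] using
        exists_natCast_not_pow_dvd_eval h hP hQ (Nat.prime_iff_prime_int.mp hp)
          (by exact_mod_cast hk)
  exact ⟨a, ha⟩

end ValueGcd

section NormBounds

open scoped Nat

lemma norm_resultant_le {A : Type*} [NormedCommRing A] [NormMulClass A] [NormOneClass A]
    {P Q : A[X]} {B : ℝ} (hP : P.supNorm ≤ B) (hQ : Q.supNorm ≤ B) :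
    ‖resultant P Q‖ ≤
      (P.natDegree + Q.natDegree)! * B ^ (P.natDegree + Q.natDegree) := by
  have hB : 0 ≤ B := P.supNorm_nonneg.trans hP
  have hentry (i j) : ‖sylvester P Q P.natDegree Q.natDegree i j‖ ≤ B := by
    rw [sylvester, Matrix.of_apply]
    induction j using Fin.addCases with
    | left j =>
      rw [Fin.addCases_left]
      split_ifs
      exacts [(Q.le_supNorm _).trans hQ, by simpa using hB]
    | right j =>
      rw [Fin.addCases_right]
      split_ifs
      exacts [(P.le_supNorm _).trans hP, by simpa using hB]
  have : Nontrivial A := NormOneClass.nontrivial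
  simpa [resultant, nsmul_eq_mul] using
    Matrix.det_le (abv := IsAbsoluteValue.toAbsoluteValue (norm : A → ℝ)) hentry

lemma sum_card_Ioi_fin (N : ℕ) : ∑ i : Fin N, (Finset.Ioi i).card = N.choose 2 := by
  simp_rw [Fin.card_Ioi]
  rw [Fin.sum_univ_eq_sum_range fun i => N - 1 - i, Finset.sum_range_reflect (fun i => i),
    Finset.sum_range_id, Nat.choose_two_right]

lemma norm_det_vandermonde_le {A : Type*} [NormedCommRing A] [NormOneClass A] {N : ℕ}
    {v : Fin N → A} {D : ℝ} (hD : ∀ i j, ‖v i - v j‖ ≤ D) :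
    ‖(Matrix.vandermonde v).det‖ ≤ D ^ N.choose 2 := by
  calc ‖(Matrix.vandermonde v).det‖
      ≤ ∏ i : Fin N, ∏ j ∈ Finset.Ioi i, ‖v j - v i‖ := by
        rw [Matrix.det_vandermonde]
        exact (Finset.norm_prod_le _ _).trans
          (Finset.prod_le_prod (fun _ _ => norm_nonneg _) fun _ _ => Finset.norm_prod_le _ _)
    _ ≤ ∏ i : Fin N, ∏ _j ∈ Finset.Ioi i, D :=
        Finset.prod_le_prod (fun _ _ => by positivity) fun i _ =>
          Finset.prod_le_prod (fun _ _ => norm_nonneg _) fun j _ => hD j i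
    _ = D ^ N.choose 2 := by
        simp_rw [Finset.prod_const, Finset.prod_pow_eq_pow_sum, sum_card_Ioi_fin]

end NormBounds

section ValueGcdProduct

open scoped Nat

variable {P Q : ℤ[X]}

lemma prod_valueGcd_dvd (a : ℤ) {N : ℕ} (hN : P.natDegree + Q.natDegree ≤ N) (v : Fin N → ℤ) :
    ∏ i, (valueGcd P Q (v i) : ℤ) ∣
      (valueGcd P Q a : ℤ) ^ (N - (P.natDegree + Q.natDegree)) * resultant P Q *
        (Matrix.vandermonde v).det := by
  set x := Int.gcdA (P.eval a) (Q.eval a)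
  set y := Int.gcdB (P.eval a) (Q.eval a)
  have hG : C x * P + C y * Q ∈ Ideal.span {P, Q} := Ideal.mem_span_pair.mpr ⟨_, _, rfl⟩
  have hGdeg : (C x * P + C y * Q).natDegree ≤ P.natDegree + Q.natDegree :=
    natDegree_add_le_of_degree_le ((natDegree_C_mul_le _ _).trans le_self_add)
      ((natDegree_C_mul_le _ _).trans le_add_self)
  have hGa : (C x * P + C y * Q).eval a = valueGcd P Q a := by
    simp [valueGcd, Int.gcd_eq_gcd_ab, x, y, mul_comm]
  rw [← hGa]
  exact prod_dvd_eval_pow_mul_resultant_mul_det_vandermonde hG hGdeg a hN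
    (fun i => Int.gcd_dvd_left ..) fun i => Int.gcd_dvd_right ..

lemma valueGcd_ne_zero_of_isRelPrime (h : IsRelPrime P Q) (x : ℤ) : valueGcd P Q x ≠ 0 := by
  obtain ⟨M, hM, hgM⟩ := exists_ne_zero_forall_valueGcd_dvd h
  exact ne_zero_of_dvd_ne_zero hM (hgM x)

lemma prod_valueGcd_le (h : IsRelPrime P Q) {d : ℕ} (hP : P.natDegree ≤ d) (hQ : Q.natDegree ≤ d)
    {N : ℕ} (hN : P.natDegree + Q.natDegree ≤ N) {v : Fin N → ℤ} (hv : Function.Injective v) {D : ℝ}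
    (hD : ∀ i j, ‖v i - v j‖ ≤ D) :
    ∏ i, (valueGcd P Q (v i) : ℝ) ≤ (d ! : ℝ) ^ N * ‖resultant P Q‖ * D ^ N.choose 2 := by
  obtain ⟨a, ha⟩ := exists_valueGcd_dvd_factorial h hP hQ
  have ha_le : (valueGcd P Q a : ℝ) ^ (N - (P.natDegree + Q.natDegree)) ≤ (d ! : ℝ) ^ N := by
    have hle : valueGcd P Q a ≤ d ! := Nat.le_of_dvd d.factorial_pos ha
    exact_mod_cast (Nat.pow_le_pow_left hle _).trans
      (Nat.pow_le_pow_right d.factorial_pos (Nat.sub_le ..))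
  have hne : (valueGcd P Q a : ℤ) ^ (N - (P.natDegree + Q.natDegree)) * resultant P Q *
      (Matrix.vandermonde v).det ≠ 0 :=
    mul_ne_zero (mul_ne_zero (pow_ne_zero _ (mod_cast valueGcd_ne_zero_of_isRelPrime h a))
      (resultant_ne_zero_of_isRelPrime h)) (Matrix.det_vandermonde_ne_zero_iff.mpr hv)
  calc ∏ i, (valueGcd P Q (v i) : ℝ)
      ≤ ‖(valueGcd P Q a : ℤ) ^ (N - (P.natDegree + Q.natDegree)) * resultant P Q *
          (Matrix.vandermonde v).det‖ := by
        rw [Int.norm_eq_abs]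
        exact_mod_cast Int.le_of_dvd (abs_pos.mpr hne)
          ((dvd_abs _ _).mpr (prod_valueGcd_dvd a hN v))
    _ = (valueGcd P Q a : ℝ) ^ (N - (P.natDegree + Q.natDegree)) * ‖resultant P Q‖ *
          ‖(Matrix.vandermonde v).det‖ := by
        simp [norm_mul, norm_pow]
    _ ≤ (d ! : ℝ) ^ N * ‖resultant P Q‖ * D ^ N.choose 2 := by
        gcongr
        exact norm_det_vandermonde_le hD

lemma sum_log_valueGcd_le (h : IsRelPrime P Q) {d : ℕ} (hP : P.natDegree ≤ d) (hQ : Q.natDegree ≤ d)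
    {N : ℕ} (hN : P.natDegree + Q.natDegree ≤ N) {v : Fin N → ℤ} (hv : Function.Injective v) {D : ℝ}
    (hD : ∀ i j, ‖v i - v j‖ ≤ D) :
    ∑ i, Real.log (valueGcd P Q (v i)) ≤
      N * Real.log d ! + Real.log ‖resultant P Q‖ + N.choose 2 * Real.log D := by
  have hgcd (i : Fin N) : (0 : ℝ) < valueGcd P Q (v i) :=
    mod_cast (valueGcd_ne_zero_of_isRelPrime h (v i)).pos
  have hle := prod_valueGcd_le h hP hQ hN hv hD
  have hpos := (Finset.prod_pos fun i _ => hgcd i).trans_le hle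
  obtain ⟨hfactres, hDpow⟩ := mul_ne_zero_iff.mp hpos.ne'
  obtain ⟨hfact, hres⟩ := mul_ne_zero_iff.mp hfactres
  rw [← Real.log_prod fun i _ => (hgcd i).ne', ← Real.log_pow, ← Real.log_pow,
    ← Real.log_mul hfact hres, ← Real.log_mul hfactres hDpow]
  exact Real.log_le_log (Finset.prod_pos fun i _ => hgcd i) hle

end ValueGcdProduct

section Interpolation

variable {𝕜 ι : Type*} [NormedField 𝕜] {s : Finset ι} {M B : ℝ}

lemma norm_coeff_prod_basisDivisor_le {x : 𝕜} {v : ι → 𝕜} (hx : ∀ j ∈ s, 1 ≤ ‖x - v j‖)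
    (hv : ∀ j ∈ s, 1 + ‖v j‖ ≤ M) (k : ℕ) :
    ‖(∏ j ∈ s, Lagrange.basisDivisor x (v j)).coeff k‖ ≤ M ^ s.card := by
  classical
  induction s using Finset.induction_on generalizing k with
  | empty =>
    simp only [Finset.prod_empty, Finset.card_empty, pow_zero, coeff_one]
    split_ifs <;> simp
  | insert i s hi ih =>
    rw [Finset.forall_mem_insert] at hx hv
    rw [Finset.prod_insert hi, Finset.card_insert_of_notMem hi, pow_succ']
    set f := ∏ j ∈ s, Lagrange.basisDivisor x (v j)
    have hf : ∀ k, ‖f.coeff k‖ ≤ M ^ s.card := ih hx.2 hv.2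
    have hXf : ‖(X * f).coeff k‖ ≤ M ^ s.card := by
      cases k with
      | zero => simpa using (norm_nonneg _).trans (hf 0)
      | succ k => simpa only [coeff_X_mul] using hf k
    calc ‖(Lagrange.basisDivisor x (v i) * f).coeff k‖
        = ‖x - v i‖⁻¹ * ‖(X * f).coeff k - v i * f.coeff k‖ := by
          rw [Lagrange.basisDivisor, mul_assoc, coeff_C_mul, sub_mul, coeff_sub, coeff_C_mul,
            norm_mul, norm_inv]
      _ ≤ 1 * (M ^ s.card + ‖v i‖ * M ^ s.card) := by
          gcongr
          · exact inv_le_one_of_one_le₀ hx.1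
          · refine (norm_sub_le _ _).trans (add_le_add hXf ?_)
            rw [norm_mul]
            gcongr
            exact hf k
      _ = (1 + ‖v i‖) * M ^ s.card := by ring
      _ ≤ M * M ^ s.card := by
          gcongr
          exacts [(norm_nonneg _).trans (hf 0), hv.1]

lemma supNorm_le_of_norm_eval_le {P : 𝕜[X]} (hP : P.degree < s.card) {v : ι → 𝕜}
    (hsep : (s : Set ι).Pairwise fun i j => 1 ≤ ‖v i - v j‖) (hv : ∀ i ∈ s, 1 + ‖v i‖ ≤ M)
    (hB : ∀ i ∈ s, ‖P.eval (v i)‖ ≤ B) :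
    P.supNorm ≤ s.card * (B * M ^ (s.card - 1)) := by
  classical
  have hinj : Set.InjOn v s := fun i hi j hj hij => by
    by_contra hne
    have := hsep hi hj hne
    norm_num [hij] at this
  obtain ⟨k, hk⟩ := P.exists_eq_supNorm
  rw [hk, Lagrange.eq_interpolate_of_eval_eq (fun i => P.eval (v i)) hinj hP fun _ _ => rfl,
    Lagrange.interpolate_apply, finsetSum_coeff, ← nsmul_eq_mul]
  refine (norm_sum_le _ _).trans (Finset.sum_le_card_nsmul _ _ _ fun i hi => ?_)
  rw [coeff_C_mul, norm_mul, ← Finset.card_erase_of_mem hi]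
  refine mul_le_mul (hB i hi) (norm_coeff_prod_basisDivisor_le (fun j hj => ?_)
    (fun j hj => hv j (Finset.mem_of_mem_erase hj)) k) (norm_nonneg _)
    ((norm_nonneg _).trans (hB i hi))
  exact hsep hi (Finset.mem_of_mem_erase hj) (Finset.ne_of_mem_erase hj).symm

lemma supNorm_le_of_norm_eval_le_of_int {P : ℤ[X]} (hP : P.degree < s.card) {v : ι → ℤ}
    (hinj : Set.InjOn v s) (hv : ∀ i ∈ s, 1 + ‖v i‖ ≤ M) (hB : ∀ i ∈ s, ‖P.eval (v i)‖ ≤ B) :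
    P.supNorm ≤ s.card * (B * M ^ (s.card - 1)) := by
  have hmap : (P.map (Int.castRingHom ℝ)).supNorm = P.supNorm := by
    simp only [supNorm_eq_iSup, coeff_map, eq_intCast, Int.norm_cast_real]
  rw [← hmap]
  refine supNorm_le_of_norm_eval_le (v := fun i => (v i : ℝ)) (degree_map_le.trans_lt hP)
    (fun i hi j hj hij => ?_) (fun i hi => by rw [Int.norm_cast_real]; exact hv i hi)
    fun i hi => by rw [eval_intCast_map, eq_intCast, Int.norm_cast_real]; exact hB i hi
  have hone : 1 ≤ |v i - v j| := Int.one_le_abs (sub_ne_zero.mpr (hinj.ne hi hj hij))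
  simpa only [Real.norm_eq_abs] using mod_cast hone

end Interpolation

lemma card_le_add_card_filter_le_of_sum_le_nsmul {ι M : Type*} [AddCommMonoid M]
    [LinearOrder M] [IsOrderedCancelAddMonoid M] {s : Finset ι} {f : ι → M}
    (hf : ∀ i ∈ s, 0 ≤ f i) {a : M} (ha : 0 < a) {k : ℕ} (hsum : ∑ i ∈ s, f i ≤ k • a) :
    s.card ≤ k + (s.filter (f · ≤ a)).card := by
  have hlarge : (s.filter (¬ f · ≤ a)).card • a ≤ k • a :=
    calc (s.filter (¬ f · ≤ a)).card • a ≤ ∑ i ∈ s with ¬ f i ≤ a, f i :=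
          Finset.card_nsmul_le_sum _ _ _ fun i hi => (not_le.mp (Finset.mem_filter.mp hi).2).le
      _ ≤ ∑ i ∈ s, f i :=
          Finset.sum_le_sum_of_subset_of_nonneg (Finset.filter_subset _ _) fun i hi _ => hf i hi
      _ ≤ k • a := hsum
  have hk := (nsmul_le_nsmul_iff_left ha).mp hlarge
  have hsplit := s.card_filter_add_card_filter_not (f · ≤ a)
  lia

lemma exists_injective_fin_forall_notMem (V : Finset ℤ) (N : ℕ) :
    ∃ v : Fin N → ℤ, Function.Injective v ∧ (∀ i j, ‖v i - v j‖ ≤ N) ∧ (∀ i, v i ∉ V) ∧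
      ∀ i, 1 + ‖v i‖ ≤ N * (V.card + 1) := by
  obtain ⟨k, hk, hkV⟩ :
      ∃ k ∈ Finset.range (V.card + 1), k ∉ V.image fun x => (x / (N : ℤ)).toNat := by
    apply Finset.exists_mem_notMem_of_card_lt_card
    rw [Finset.card_range]
    exact Nat.lt_succ_of_le Finset.card_image_le
  rw [Finset.mem_range, Nat.lt_succ_iff] at hk
  refine ⟨fun i => (N * k + i : ℕ), fun i j hij => Fin.ext (by simpa using hij), fun i j => ?_,
    fun i hiV => hkV (Finset.mem_image.mpr ⟨_, hiV, ?_⟩), fun i => ?_⟩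
  · rw [Int.norm_eq_abs, ← Int.cast_abs, ← Int.cast_natCast, Int.cast_le, abs_le]
    beta_reduce
    omega
  · rw [← Int.natCast_ediv, Int.toNat_natCast, Nat.mul_add_div i.pos, Nat.div_eq_of_lt i.2,
      add_zero]
  · have hle : 1 + (N * k + i) ≤ N * (V.card + 1) :=
      calc 1 + (N * k + i) ≤ N * (k + 1) := by lia
        _ ≤ N * (V.card + 1) := by gcongr
    rw [Int.norm_natCast]
    exact_mod_cast hle

section Height

variable {P Q : ℤ[X]}

lemma ratHeight_nonneg (q : ℚ) : 0 ≤ ratHeight q :=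
  Real.log_nonneg (le_max_of_le_right (mod_cast q.den_pos))

lemma log_max_abs_eq_ratHeight_div_add_log_gcd {p q : ℤ} (hq : q ≠ 0) :
    Real.log (max |(p : ℝ)| |(q : ℝ)|) = ratHeight (p / q) + Real.log (Int.gcd p q) := by
  obtain ⟨k, hp, hq'⟩ := Rat.exists_eq_mul_div_num_and_eq_mul_div_den p hq
  set r : ℚ := p / q
  have hk : k ≠ 0 := by
    rintro rfl
    simp [hq] at hq'
  have hgcd : Int.gcd p q = k.natAbs := by
    conv_lhs => rw [hp, hq']
    rw [Int.gcd_mul_left, Int.gcd_def, Int.natAbs_natCast, r.reduced.gcd_eq_one, mul_one]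
  have hmax : max |(p : ℝ)| |(q : ℝ)| = max |(r.num : ℝ)| r.den * |(k : ℝ)| := by
    rw [hp, hq']
    push_cast
    rw [abs_mul, abs_mul, ← mul_max_of_nonneg _ _ (abs_nonneg _), Nat.abs_cast, mul_comm]
  have hr : max |(r.num : ℝ)| r.den ≠ 0 := (lt_max_of_lt_right (mod_cast r.den_pos)).ne'
  rw [hmax, Real.log_mul hr (by simpa using hk), hgcd, Nat.cast_natAbs, Int.cast_abs, ratHeight]

lemma fracHeight_eq_log_max_supNorm : fracHeight P Q = Real.log (max P.supNorm Q.supNorm) := by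
  simp only [fracHeight, supNorm_eq_iSup, Int.norm_eq_abs]

lemma one_le_supNorm_of_ne_zero (h : P ≠ 0) : 1 ≤ P.supNorm := by
  refine le_trans ?_ (P.le_supNorm P.natDegree)
  rw [Int.norm_eq_abs]
  exact_mod_cast Int.one_le_abs (leadingCoeff_ne_zero.mpr h)

lemma one_le_max_supNorm_of_isRelPrime (h : IsRelPrime P Q) : 1 ≤ max P.supNorm Q.supNorm := by
  obtain hP | hQ : P ≠ 0 ∨ Q ≠ 0 := by
    by_contra! h0
    rw [h0.1, h0.2, isRelPrime_zero_left] at h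
    exact not_isUnit_zero h
  · exact le_max_of_le_left (one_le_supNorm_of_ne_zero hP)
  · exact le_max_of_le_right (one_le_supNorm_of_ne_zero hQ)

open scoped Nat in
lemma log_norm_resultant_le (h : IsRelPrime P Q) {m : ℕ} (hm : P.natDegree + Q.natDegree ≤ m) :
    Real.log ‖resultant P Q‖ ≤ Real.log m ! + m * fracHeight P Q := by
  set B := max P.supNorm Q.supNorm
  have hB : 1 ≤ B := one_le_max_supNorm_of_isRelPrime h
  calc Real.log ‖resultant P Q‖ ≤ Real.log (m ! * B ^ m) := by
        refine Real.log_le_log (norm_pos_iff.mpr (resultant_ne_zero_of_isRelPrime h)) ?_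
        refine (norm_resultant_le (le_max_left ..) (le_max_right ..)).trans ?_
        gcongr
    _ = Real.log m ! + m * fracHeight P Q := by
        rw [Real.log_mul (by positivity) (by positivity), Real.log_pow,
          fracHeight_eq_log_max_supNorm]

end Height

section SmallValueGcd

open scoped Nat

variable {P Q : ℤ[X]} {d : ℕ}

lemma log_factorial_le (n : ℕ) : Real.log n ! ≤ n * Real.log n := by
  rw [← Real.log_pow]
  exact Real.log_le_log (by positivity) (mod_cast n.factorial_le_pow)

lemma sum_log_valueGcd_le_of_natDegree_le (h : IsRelPrime P Q) (hd : 1 ≤ d)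
    (hP : P.natDegree ≤ d) (hQ : Q.natDegree ≤ d) {v : Fin (8 * d) → ℤ}
    (hv : Function.Injective v) (hdist : ∀ i j, ‖v i - v j‖ ≤ 8 * d) :
    ∑ i, Real.log (valueGcd P Q (v i)) ≤
      4 * d * (37 / 2 * d * Real.log (4 * d) + fracHeight P Q / 2) := by
  have hd' : (1 : ℝ) ≤ d := mod_cast hd
  set L := Real.log (4 * d)
  have hL : 0 ≤ L := Real.log_nonneg (by linarith)
  have hfact : Real.log d ! ≤ d * L :=
    (log_factorial_le d).trans (by gcongr; exact Real.log_le_log (by linarith) (by linarith))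
  have hres : Real.log ‖resultant P Q‖ ≤ 2 * d * L + 2 * d * fracHeight P Q := by
    refine (log_norm_resultant_le h (m := 2 * d) (by lia)).trans ?_
    push_cast
    gcongr
    refine (log_factorial_le _).trans ?_
    push_cast
    gcongr
    exact Real.log_le_log (by linarith) (by linarith)
  have hdisc : ((8 * d).choose 2 : ℝ) * Real.log (8 * d) ≤ 32 * d ^ 2 * (2 * L) := by
    gcongr
    · exact Real.log_nonneg (by linarith)
    · rw [Nat.cast_choose_two]
      push_cast
      nlinarith
    · rw [← Real.log_rpow (by linarith)]
      refine Real.log_le_log (by linarith) ?_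
      norm_cast
      nlinarith
  have hlin : (d : ℝ) * L ≤ d ^ 2 * L := by
    gcongr
    exact le_self_pow₀ hd' two_ne_zero
  calc ∑ i, Real.log (valueGcd P Q (v i))
      ≤ 8 * d * Real.log d ! + Real.log ‖resultant P Q‖ +
          (8 * d).choose 2 * Real.log (8 * d) :=
        by simpa only [Nat.cast_mul, Nat.cast_ofNat] using
          sum_log_valueGcd_le h hP hQ (by lia) hv hdist
    _ ≤ 8 * d * (d * L) + (2 * d * L + 2 * d * fracHeight P Q) + 32 * d ^ 2 * (2 * L) := by gcongr
    _ ≤ 4 * d * (37 / 2 * d * L + fracHeight P Q / 2) := by linarith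

lemma succ_le_card_filter_log_valueGcd_le (h : IsRelPrime P Q) (hd : 1 ≤ d)
    (hP : P.natDegree ≤ d) (hQ : Q.natDegree ≤ d) {v : Fin (8 * d) → ℤ}
    (hv : Function.Injective v) (hdist : ∀ i j, ‖v i - v j‖ ≤ 8 * d) :
    d + 1 ≤ (Finset.univ.filter fun i => Real.log (valueGcd P Q (v i)) ≤
      37 / 2 * d * Real.log (4 * d) + fracHeight P Q / 2).card := by
  have hd' : (1 : ℝ) ≤ d := mod_cast hd
  have hL : 0 < Real.log (4 * d) := Real.log_pos (by linarith)
  have hh : 0 ≤ fracHeight P Q := fracHeight_eq_log_max_supNorm (P := P) ▸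
    Real.log_nonneg (one_le_max_supNorm_of_isRelPrime h)
  have hcard := card_le_add_card_filter_le_of_sum_le_nsmul (s := Finset.univ)
    (f := fun i => Real.log (valueGcd P Q (v i))) (k := 4 * d)
    (a := 37 / 2 * d * Real.log (4 * d) + fracHeight P Q / 2)
    (fun i _ => Real.log_natCast_nonneg _) (by positivity)
    (by simpa only [nsmul_eq_mul, Nat.cast_mul, Nat.cast_ofNat] using
      sum_log_valueGcd_le_of_natDegree_le h hd hP hQ hv hdist)
  rw [Finset.card_univ, Fintype.card_fin] at hcard
  lia

end SmallValueGcd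

section Assembly

variable {P Q : ℤ[X]} {d : ℕ}

lemma fracHeight_le_of_log_valueGcd_le (h : IsRelPrime P Q) (hP : P.natDegree ≤ d)
    (hQ : Q.natDegree ≤ d) {ι : Type*} {s : Finset ι} (hs : s.card = d + 1) {v : ι → ℤ}
    (hv : Set.InjOn v s) {M b S : ℝ} (hM : ∀ i ∈ s, 1 + ‖v i‖ ≤ M)
    (hQv : ∀ i ∈ s, Q.eval (v i) ≠ 0)
    (hb : ∀ i ∈ s, ratHeight ((P.eval (v i) : ℤ) / (Q.eval (v i) : ℤ)) ≤ b)
    (hS : ∀ i ∈ s, Real.log (valueGcd P Q (v i)) ≤ S) :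
    fracHeight P Q ≤ Real.log (d + 1) + (b + S + d * Real.log M) := by
  obtain ⟨i₀, hi₀⟩ : s.Nonempty := Finset.card_pos.mp (by lia)
  have hM0 : 0 < M := lt_of_lt_of_le (by positivity) (hM i₀ hi₀)
  have heval (i) (hi : i ∈ s) :
      max ‖P.eval (v i)‖ ‖Q.eval (v i)‖ ≤ Real.exp (b + S) := by
    have hpos : 0 < max ‖P.eval (v i)‖ ‖Q.eval (v i)‖ :=
      lt_max_of_lt_right (norm_pos_iff.mpr (hQv i hi))
    rw [← Real.log_le_iff_le_exp hpos, Int.norm_eq_abs, Int.norm_eq_abs,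
      log_max_abs_eq_ratHeight_div_add_log_gcd (hQv i hi)]
    exact add_le_add (hb i hi) (hS i hi)
  have hnorm {F : ℤ[X]} (hF : F.natDegree ≤ d) (hFv : ∀ i ∈ s, ‖F.eval (v i)‖ ≤ Real.exp (b + S)) :
      F.supNorm ≤ (d + 1) * (Real.exp (b + S) * M ^ d) := by
    have hdeg : F.degree < s.card :=
      (degree_le_of_natDegree_le hF).trans_lt (by rw [hs]; exact_mod_cast d.lt_succ_self)
    simpa [hs] using supNorm_le_of_norm_eval_le_of_int hdeg hv hM hFv
  calc fracHeight P Q = Real.log (max P.supNorm Q.supNorm) := fracHeight_eq_log_max_supNorm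
    _ ≤ Real.log ((d + 1) * (Real.exp (b + S) * M ^ d)) :=
        Real.log_le_log (one_pos.trans_le (one_le_max_supNorm_of_isRelPrime h))
          (max_le (hnorm hP fun i hi => (le_max_left ..).trans (heval i hi))
            (hnorm hQ fun i hi => (le_max_right ..).trans (heval i hi)))
    _ = Real.log (d + 1) + (b + S + d * Real.log M) := by
        rw [Real.log_mul (by positivity) (by positivity), Real.log_mul (by positivity)
          (by positivity), Real.log_exp, Real.log_pow]

lemma fracHeight_le_of_ratHeight_le (h : IsRelPrime P Q) (hd : 1 ≤ d) (hP : P.natDegree ≤ d)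
    (hQ : Q.natDegree ≤ d) {v : Fin (8 * d) → ℤ} (hv : Function.Injective v)
    (hdist : ∀ i j, ‖v i - v j‖ ≤ 8 * d) {M b : ℝ} (hM : ∀ i, 1 + ‖v i‖ ≤ M)
    (hQv : ∀ i, Q.eval (v i) ≠ 0)
    (hb : ∀ i, ratHeight ((P.eval (v i) : ℤ) / (Q.eval (v i) : ℤ)) ≤ b) :
    fracHeight P Q ≤ 2 * b + 2 * d * Real.log M + 39 * d * Real.log (4 * d) := by
  obtain ⟨s, hs, hcard⟩ := Finset.exists_subset_card_eq
    (succ_le_card_filter_log_valueGcd_le h hd hP hQ hv hdist)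
  have hle := fracHeight_le_of_log_valueGcd_le h hP hQ hcard hv.injOn (fun i _ => hM i)
    (fun i _ => hQv i) (fun i _ => hb i) fun i hi => (Finset.mem_filter.mp (hs hi)).2
  have hd' : (1 : ℝ) ≤ d := mod_cast hd
  have hlog : Real.log (d + 1) ≤ d * Real.log (4 * d) :=
    (Real.log_le_log (by linarith) (by linarith)).trans
      (le_mul_of_one_le_left (Real.log_nonneg (by linarith)) hd')
  linarith

end Assembly

lemma one_le_log_four_mul {x : ℝ} (hx : 1 ≤ x) : 1 ≤ Real.log (4 * x) := by
  rw [Real.le_log_iff_exp_le (by linarith)]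
  linarith [Real.exp_one_lt_three]

lemma log_four_mul_sq_mul {x m : ℝ} (hx : 1 ≤ x) (hm : 1 ≤ m) :
    Real.log ((4 * x) ^ 2 * m) = 2 * Real.log (4 * x) + Real.log m := by
  rw [Real.log_mul (by positivity) (by positivity), Real.log_pow, Nat.cast_ofNat]

lemma max_one_mul_log_add_mul_log_le {x m y : ℝ} (hx : 1 ≤ x) (hm : 1 ≤ m)
    (hy : |y| ≤ (4 * x) ^ 2 * m) :
    max 1 (x * Real.log x + x * Real.log (max 1 |y|)) ≤
      x * (3 * Real.log (4 * x) + Real.log m) := by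
  have hL := one_le_log_four_mul hx
  have hlogm := Real.log_nonneg hm
  refine max_le (one_le_mul_of_one_le_of_one_le hx (by linarith)) ?_
  have hlogx : Real.log x ≤ Real.log (4 * x) := Real.log_le_log (by linarith) (by linarith)
  have hlogy : Real.log (max 1 |y|) ≤ 2 * Real.log (4 * x) + Real.log m := by
    rw [← log_four_mul_sq_mul hx hm]
    exact Real.log_le_log (by positivity) (max_le (by nlinarith) hy)
  rw [← mul_add]
  exact mul_le_mul_of_nonneg_left (by linarith) (by linarith)

theorem stmt_19_general (c : ℝ) (P Q : Polynomial ℤ) (hcop : IsRelPrime P Q)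
    (d : ℕ) (hd : 1 ≤ d) (hdeg : max P.natDegree Q.natDegree ≤ d)
    (V : Finset ℤ) (hpoles : ∀ x : ℤ, x ∉ V → Q.eval x ≠ 0)
    (hval : ∀ x : ℤ, x ∉ V →
      ratHeight (((P.eval x : ℤ) : ℚ) / ((Q.eval x : ℤ) : ℚ)) ≤
        c * max 1 ((d : ℝ) * Real.log (d : ℝ) + (d : ℝ) * Real.log (max 1 |(x : ℝ)|))) :
    fracHeight P Q ≤
      2 * (c + 8) * (3 + Real.log (max 1 (V.card : ℝ))) * d * Real.log (4 * d) := by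
  set m : ℝ := max 1 (V.card : ℝ)
  have hd' : (1 : ℝ) ≤ d := mod_cast hd
  have hm : 1 ≤ m := le_max_left ..
  obtain ⟨v, hv, hdist, hvV, hvN⟩ := exists_injective_fin_forall_notMem V (8 * d)
  push_cast at hdist hvN
  have hvM (i) : 1 + ‖v i‖ ≤ (4 * d) ^ 2 * m :=
    calc 1 + ‖v i‖ ≤ 8 * d * (V.card + 1) := hvN i
      _ ≤ 8 * d * (m + m) := by gcongr; exact le_max_right ..
      _ = 16 * d * m := by ring
      _ ≤ (4 * d) ^ 2 * m := by gcongr; nlinarith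
  have hc : 0 ≤ c := nonneg_of_mul_nonneg_left
    ((ratHeight_nonneg _).trans (hval _ (hvV ⟨0, by lia⟩))) (by positivity)
  have hb (i) : ratHeight ((P.eval (v i) : ℤ) / (Q.eval (v i) : ℤ)) ≤
      c * (d * (3 * Real.log (4 * d) + Real.log m)) := by
    refine (hval _ (hvV i)).trans ?_
    gcongr
    refine max_one_mul_log_add_mul_log_le hd' hm ?_
    rw [← Int.norm_eq_abs]
    linarith [hvM i]
  have hle := fracHeight_le_of_ratHeight_le hcop hd (le_of_max_le_left hdeg)
    (le_of_max_le_right hdeg) hv hdist hvM (fun i => hpoles _ (hvV i)) hb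
  rw [log_four_mul_sq_mul hd' hm] at hle
  have hlogm : (c + 1) * d * Real.log m ≤ (c + 1) * d * Real.log m * Real.log (4 * d) :=
    le_mul_of_one_le_right (by have := Real.log_nonneg hm; positivity) (one_le_log_four_mul hd')
  have hrest : 0 ≤ d * Real.log (4 * d) * (14 * Real.log m + 5) := by
    have := Real.log_nonneg hm
    have := one_le_log_four_mul hd'
    positivity
  linarith

/-- Let `c ≥ 1` and let `F = P/Q ∈ ℚ(X)` (with `P, Q ∈ ℤ[X]` coprime, i.e.
in lowest terms) have degree at most `d ≥ 1`. Let `V ⊂ ℤ` be a finite set such that `F` has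
no poles in `ℤ \ V`. Assume `h(F(x)) ≤ c·max{1, d·log d + d·h(x)}` for every integer
`x ∉ V`. Then `h(F) ≤ C·d·log(4d)` with
`C = (4c+1923)·(12 + log max{1, #V} + 2·log c)`. -/
theorem stmt_19 (c : ℝ) (hc : 1 ≤ c)
    (P Q : Polynomial ℤ) (hcop : IsRelPrime P Q) (hQ : Q ≠ 0)
    (d : ℕ) (hd : 1 ≤ d) (hdeg : max P.natDegree Q.natDegree ≤ d)
    (V : Finset ℤ) (hpoles : ∀ x : ℤ, x ∉ V → Q.eval x ≠ 0)
    (hval : ∀ x : ℤ, x ∉ V →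
      ratHeight (((P.eval x : ℤ) : ℚ) / ((Q.eval x : ℤ) : ℚ)) ≤
        c * max 1 ((d : ℝ) * Real.log (d : ℝ) + (d : ℝ) * Real.log (max 1 |(x : ℝ)|)))
    (C : ℝ) (hC : C = (4 * c + 1923) * (12 + Real.log (max 1 (V.card : ℝ)) + 2 * Real.log c)) :
    fracHeight P Q ≤ C * (d : ℝ) * Real.log (4 * (d : ℝ)) := by
  have hV : 0 ≤ Real.log (max 1 (V.card : ℝ)) := Real.log_nonneg (le_max_left ..)
  have hlogc : 0 ≤ Real.log c := Real.log_nonneg hc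
  have hL : 0 ≤ Real.log (4 * (d : ℝ)) := mod_cast Real.log_natCast_nonneg (4 * d)
  refine (stmt_19_general c P Q hcop d hd hdeg V hpoles hval).trans ?_
  rw [hC]
  gcongr ?_ * ?_ * (d : ℝ) * Real.log (4 * (d : ℝ)) <;> linarith
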